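/- arXiv:2103.01191 — 8 statements merged into one kernel-verified Lean document; each statement's English description precedes it below -/
import Mathlib

section
/- For all points p = (t_p, x_p) and q = (t_q, x_q) in ℝ × ℝⁿ, the following four conditions are equivalent: (i) ‖x_q − x_p‖ ≤ t_q − t_p (i.e. p ≤ q in the causal relation of Minkowski space); (ii) d^N(p,q) = t_q − t_p; (iii) d^R(p,q) ≤ √2·(t_q − t_p); (iv) d^E(p,q) ≤ 2·(t_q − t_p). -/
/-- On Minkowski space, the causal relation `p ≤ q` is characterized
equivalently by the null distance (equality), the Riemannianized distance (`≤ √2·Δt`),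
and the elevator distance (`≤ 2·Δt`). -/
theorem minkowski_causal_characterizations (n : ℕ) (tp tq : ℝ)
    (xp xq : EuclideanSpace ℝ (Fin n)) :
    (‖xq - xp‖ ≤ tq - tp ↔ max |tq - tp| ‖xq - xp‖ = tq - tp) ∧
    (‖xq - xp‖ ≤ tq - tp ↔
      Real.sqrt ((tq - tp) ^ 2 + ‖xq - xp‖ ^ 2) ≤ Real.sqrt 2 * (tq - tp)) ∧
    (‖xq - xp‖ ≤ tq - tp ↔ |tq - tp| + ‖xq - xp‖ ≤ 2 * (tq - tp)) := by
  have hr : 0 ≤ ‖xq - xp‖ := norm_nonneg _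
  generalize ‖xq - xp‖ = r at *
  generalize tq - tp = t at *
  have h2 : (0 : ℝ) < Real.sqrt 2 := Real.sqrt_pos.2 (by norm_num)
  have h22 : Real.sqrt 2 ^ 2 = 2 := Real.sq_sqrt (by norm_num)
  refine ⟨⟨fun h => ?_, fun h => ?_⟩, ⟨fun h => ?_, fun h => ?_⟩, ⟨fun h => ?_, fun h => ?_⟩⟩
  · rw [abs_of_nonneg (hr.trans h), max_eq_left h]
  · exact (le_max_right _ _).trans h.le
  · have ht : 0 ≤ t := hr.trans h
    apply Real.sqrt_le_iff.2
    refine ⟨by positivity, ?_⟩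
    rw [mul_pow, h22]
    nlinarith
  · obtain ⟨h0, h1⟩ := Real.sqrt_le_iff.1 h
    have ht : 0 ≤ t := nonneg_of_mul_nonneg_right h0 h2
    rw [mul_pow, h22] at h1
    exact abs_le_of_sq_le_sq' (by linarith) ht |>.2
  · rw [abs_of_nonneg (hr.trans h)]
    linarith
  · have := le_abs_self t
    linarith
end

section
/- Let d be a metric on M = I × S as in the GRW setup, with f continuous, and suppose d satisfies (F6) with constant C₆. Then for all p,q ∈ M with t_p ≤ t_q, one has C₆·min{t_q − t_p, A_{[t_p,t_q]}·d_S(p_S,q_S)} ≤ d(p,q), where A_{[t_p,t_q]} := inf{f(t) : t_p ≤ t ≤ t_q}. -/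
/-- A (definite) metric given as a plain distance function on a set. -/
def IsMetric {X : Type*} (d : X → X → ℝ) : Prop :=
  (∀ p q, 0 ≤ d p q) ∧ (∀ p, d p p = 0) ∧ (∀ p q, d p q = 0 → p = q) ∧
    (∀ p q, d p q = d q p) ∧ (∀ p q r, d p r ≤ d p q + d q r)

/-- The underlying set `M = I × S` of a GRW spacetime, where `I = (a,b) ⊆ ℝ` with
`-∞ ≤ a < b ≤ ∞`. -/
abbrev GRWPoint (a b : EReal) (S : Type*) : Type _ :=
  {t : ℝ // a < (t : EReal) ∧ (t : EReal) < b} × S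

/-- The vertical exit cost `E_{(t₁,t₂)}(t_p,t_q) ∈ (0,∞]` of the slab `(t₁,t₂) × S`
inside the interval `(a,b)`. -/
noncomputable def exitCost (a b : EReal) (t₁ t₂ tp tq : ℝ) : EReal :=
  if a < (t₁ : EReal) then
    (if (t₂ : EReal) < b then ((min (tp + tq - 2 * t₁) (2 * t₂ - tp - tq) : ℝ) : EReal)
     else ((tp + tq - 2 * t₁ : ℝ) : EReal))
  else
    (if (t₂ : EReal) < b then ((2 * t₂ - tp - tq : ℝ) : EReal) else (⊤ : EReal))

/-- Property (F6), together with continuity of the warping function,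
yields the lower bound `C₆·min{t_q − t_p, A_{[t_p,t_q]}·d_S(p_S,q_S)} ≤ d(p,q)`. -/
theorem F6_lower_bound {S : Type*} (dS : S → S → ℝ) (hdS : IsMetric dS)
    (a b : EReal) (hab : a < b)
    (f : ℝ → ℝ) (hf : ∀ t : ℝ, a < (t : EReal) → (t : EReal) < b → 0 < f t)
    (hfcont : ContinuousOn f {t : ℝ | a < (t : EReal) ∧ (t : EReal) < b})
    (d : GRWPoint a b S → GRWPoint a b S → ℝ) (hd : IsMetric d)
    (C₆ : ℝ) (hC₆ : 0 < C₆)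
    (hF6 : ∀ t₁ t₂ : ℝ, a ≤ (t₁ : EReal) → (t₂ : EReal) ≤ b → t₁ < t₂ →
      ∀ p q : GRWPoint a b S, t₁ < (p.1 : ℝ) → (p.1 : ℝ) < t₂ →
        t₁ < (q.1 : ℝ) → (q.1 : ℝ) < t₂ →
      (C₆ : EReal) * min (exitCost a b t₁ t₂ (p.1 : ℝ) (q.1 : ℝ))
          ((sInf (f '' Set.Ioo t₁ t₂) * dS p.2 q.2 : ℝ) : EReal) ≤ ((d p q : ℝ) : EReal)) :
    ∀ p q : GRWPoint a b S, (p.1 : ℝ) ≤ (q.1 : ℝ) →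
      C₆ * min ((q.1 : ℝ) - (p.1 : ℝ))
        (sInf (f '' Set.Icc (p.1 : ℝ) (q.1 : ℝ)) * dS p.2 q.2) ≤ d p q := by
  intro p q hpq
  obtain ⟨⟨tp, hpa, hpb⟩, x⟩ := p
  obtain ⟨⟨tq, hqa, hqb⟩, y⟩ := q
  simp only at hpq ⊢
  have hD : 0 ≤ dS x y := hdS.1 x y
  have hIcc : ∀ t ∈ Set.Icc tp tq, a < (t : EReal) ∧ (t : EReal) < b := fun t ht =>
    ⟨lt_of_lt_of_le hpa (EReal.coe_le_coe_iff.2 ht.1),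
      lt_of_le_of_lt (EReal.coe_le_coe_iff.2 ht.2) hqb⟩
  have hopen : IsOpen {t : ℝ | a < (t : EReal) ∧ (t : EReal) < b} :=
    (isOpen_Ioo (a := a) (b := b)).preimage continuous_coe_real_ereal
  have hbdd : BddBelow (f '' Set.Icc tp tq) := by
    refine ⟨0, ?_⟩
    rintro _ ⟨t, ht, rfl⟩
    exact (hf t (hIcc t ht).1 (hIcc t ht).2).le
  set A := sInf (f '' Set.Icc tp tq) with hA
  have key : ∀ δ : ℝ, 0 < δ →
      C₆ * min (tq - tp) ((A - δ) * dS x y) ≤ d (⟨tp, hpa, hpb⟩, x) (⟨tq, hqa, hqb⟩, y) := by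
    intro δ hδ
    have hU : IsOpen ({t : ℝ | a < (t : EReal) ∧ (t : EReal) < b} ∩ f ⁻¹' Set.Ioi (A - δ)) :=
      hfcont.isOpen_inter_preimage hopen isOpen_Ioi
    have hsub : Set.Icc tp tq ⊆
        {t : ℝ | a < (t : EReal) ∧ (t : EReal) < b} ∩ f ⁻¹' Set.Ioi (A - δ) := by
      intro t ht
      refine ⟨hIcc t ht, ?_⟩
      have : A ≤ f t := csInf_le hbdd ⟨t, ht, rfl⟩
      simp only [Set.mem_preimage, Set.mem_Ioi]
      linarith
    obtain ⟨ε, hε, hth⟩ := isCompact_Icc.exists_thickening_subset_open hU hsub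
    have hin : ∀ t : ℝ, tp - ε < t → t < tq + ε →
        (a < (t : EReal) ∧ (t : EReal) < b) ∧ A - δ < f t := by
      intro t h1 h2
      have : t ∈ Metric.thickening ε (Set.Icc tp tq) := by
        rw [Metric.mem_thickening_iff]
        rcases lt_or_ge t tp with h | h
        · exact ⟨tp, ⟨le_rfl, hpq⟩, by rw [Real.dist_eq, abs_lt]; constructor <;> linarith⟩
        · rcases lt_or_ge tq t with h' | h'
          · exact ⟨tq, ⟨hpq, le_rfl⟩, by rw [Real.dist_eq, abs_lt]; constructor <;> linarith⟩
          · exact ⟨t, ⟨h, h'⟩, by simpa using hε⟩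
      exact hth this
    have h1 := (hin (tp - ε / 2) (by linarith) (by linarith)).1
    have h2 := (hin (tq + ε / 2) (by linarith) (by linarith)).1
    have h := hF6 (tp - ε / 2) (tq + ε / 2) h1.1.le h2.2.le (by linarith)
      (⟨tp, hpa, hpb⟩, x) (⟨tq, hqa, hqb⟩, y) (by simp only; linarith) (by simp only; linarith)
      (by simp only; linarith) (by simp only; linarith)
    simp only [exitCost, if_pos h1.1, if_pos h2.2] at h
    rw [← EReal.coe_strictMono.monotone.map_min, ← EReal.coe_mul, EReal.coe_le_coe_iff] at h
    refine le_trans ?_ h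
    have hinf : A - δ ≤ sInf (f '' Set.Ioo (tp - ε / 2) (tq + ε / 2)) := by
      refine le_csInf ⟨_, tp, ⟨by linarith, by linarith⟩, rfl⟩ ?_
      rintro _ ⟨t, ht, rfl⟩
      exact (hin t (by linarith [ht.1]) (by linarith [ht.2])).2.le
    refine mul_le_mul_of_nonneg_left ?_ hC₆.le
    refine min_le_min (le_min (by linarith) (by linarith)) ?_
    exact mul_le_mul_of_nonneg_right hinf hD
  refine le_of_forall_pos_le_add fun η hη => ?_
  have hpos : 0 < C₆ * (dS x y + 1) := by positivity
  have hk := key (η / (C₆ * (dS x y + 1))) (by positivity)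
  set δ := η / (C₆ * (dS x y + 1)) with hδ
  have hδ0 : 0 < δ := by positivity
  have hδη : δ * (C₆ * (dS x y + 1)) = η := div_mul_cancel₀ _ hpos.ne'
  have hmin : min (tq - tp) (A * dS x y) ≤ min (tq - tp) ((A - δ) * dS x y) + δ * dS x y := by
    have h0 : 0 ≤ δ * dS x y := by positivity
    rw [← min_add_add_right]
    exact min_le_min (by linarith) (by linarith)
  have := mul_le_mul_of_nonneg_left hmin hC₆.le
  nlinarith [mul_pos hδ0 hC₆]
end

section
/- Let d be a metric on M = I × S as in the GRW setup, with a ∈ ℝ finite, and suppose d satisfies (F4) with constant C₄. Suppose there is a sequence a_j → a⁺ in I along which f(a_j) → 0. Then: (i) for all p,q ∈ M, d(p,q) ≤ C₄·(t_p + t_q − 2a); (ii) every sequence p_k = (t_k, x_k) in M with t_k → a⁺ is a Cauchy sequence in (M,d), regardless of the spatial motion of (x_k); and (iii) for any two sequences p_k = (t_k, x_k) and q_k = (u_k, y_k) in M with t_k → a⁺ and u_k → a⁺, one has d(p_k, q_k) → 0, so the two sequences determine the same point of the metric completion of (M,d). -/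
open Filter Topology

/-- The underlying set `M = I × S` of a GRW spacetime with finite left endpoint `a ∈ ℝ`,
where `I = (a,b)` with `a < b ≤ ∞`. -/
abbrev GRWPointF (a : ℝ) (b : EReal) (S : Type*) : Type _ :=
  {t : ℝ // a < t ∧ (t : EReal) < b} × S

/-- (F4) and sequential spatial pinching `f(a_j) → 0` along `a_j → a⁺`
imply `d(p,q) ≤ C₄·(t_p + t_q − 2a)`, so sequences with times tending to `a⁺` are Cauchy,
and any two such sequences are equivalent in the metric completion. -/
theorem F4_spatial_pinching {S : Type*} (dS : S → S → ℝ) (hdS : IsMetric dS)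
    (a : ℝ) (b : EReal) (hab : (a : EReal) < b)
    (f : ℝ → ℝ) (hf : ∀ t : ℝ, a < t → (t : EReal) < b → 0 < f t)
    (d : GRWPointF a b S → GRWPointF a b S → ℝ) (hd : IsMetric d)
    (C₄ : ℝ) (hC₄ : 0 < C₄)
    (hF4 : ∀ p q : GRWPointF a b S, ∀ c : ℝ, a < c → (c : EReal) < b →
      d p q ≤ C₄ * (|(p.1 : ℝ) - c| + f c * dS p.2 q.2 + |(q.1 : ℝ) - c|))
    (α : ℕ → ℝ) (hαmem : ∀ j, a < α j ∧ ((α j : ℝ) : EReal) < b)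
    (hαa : Tendsto α atTop (𝓝 a))
    (hfα : Tendsto (fun j => f (α j)) atTop (𝓝 0)) :
    (∀ p q : GRWPointF a b S, d p q ≤ C₄ * ((p.1 : ℝ) + (q.1 : ℝ) - 2 * a)) ∧
    (∀ p : ℕ → GRWPointF a b S, Tendsto (fun k => ((p k).1 : ℝ)) atTop (𝓝 a) →
      ∀ ε : ℝ, 0 < ε → ∃ N : ℕ, ∀ j k : ℕ, N ≤ j → N ≤ k → d (p j) (p k) < ε) ∧
    (∀ p q : ℕ → GRWPointF a b S, Tendsto (fun k => ((p k).1 : ℝ)) atTop (𝓝 a) →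
      Tendsto (fun k => ((q k).1 : ℝ)) atTop (𝓝 a) →
      Tendsto (fun k => d (p k) (q k)) atTop (𝓝 0)) := by
  have h1 : ∀ p q : GRWPointF a b S, d p q ≤ C₄ * ((p.1 : ℝ) + (q.1 : ℝ) - 2 * a) := by
    intro p q
    have hp := p.1.2.1
    have hq := q.1.2.1
    have ht : Tendsto (fun j => C₄ * (|(p.1 : ℝ) - α j| + f (α j) * dS p.2 q.2
        + |(q.1 : ℝ) - α j|)) atTop
        (𝓝 (C₄ * (|(p.1 : ℝ) - a| + 0 * dS p.2 q.2 + |(q.1 : ℝ) - a|))) :=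
      ((((tendsto_const_nhds.sub hαa).abs).add (hfα.mul_const _)).add
        ((tendsto_const_nhds.sub hαa).abs)).const_mul C₄
    have hle := ge_of_tendsto' ht (fun j => hF4 p q (α j) (hαmem j).1 (hαmem j).2)
    rw [abs_of_pos (sub_pos.mpr hp), abs_of_pos (sub_pos.mpr hq)] at hle
    linarith
  refine ⟨h1, ?_, ?_⟩
  · intro p hp ε hε
    have hδ : a < a + ε / (2 * C₄) := by
      have : 0 < ε / (2 * C₄) := by positivity
      linarith
    obtain ⟨N, hN⟩ := eventually_atTop.mp (hp.eventually (gt_mem_nhds hδ))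
    refine ⟨N, fun j k hj hk => (h1 _ _).trans_lt ?_⟩
    have h2 := hN j hj
    have h3 := hN k hk
    calc C₄ * (((p j).1 : ℝ) + ((p k).1 : ℝ) - 2 * a)
        < C₄ * (2 * (ε / (2 * C₄))) := mul_lt_mul_of_pos_left (by linarith) hC₄
      _ = ε := by field_simp
  · intro p q hp hq
    have ht := ((hp.add hq).sub_const (2 * a)).const_mul C₄
    have h0 : C₄ * (a + a - 2 * a) = 0 := by ring
    rw [h0] at ht
    exact squeeze_zero (fun k => hd.1 _ _) (fun k => h1 _ _) ht
end

section
/- Let d be a metric on M = I × S as in the GRW setup, satisfying (F4) and (F5) with constants C₄ and C₅, and suppose 0 < f_inf and f_sup < ∞, where f_inf := inf{f(t) : t ∈ I} and f_sup := sup{f(t) : t ∈ I}. Let t₀ be a finite point of the closure of I in ℝ, and suppose f(t) → f₀ as t → t₀ within I, with f₀ = f_inf. Let p_k = (t_k, x_k) and q_k = (u_k, y_k) be Cauchy sequences in (M,d) with t_k → t₀ and u_k → t₀. Then the limits L_S := lim_{k→∞} d_S(x_k, y_k) and L := lim_{k→∞} d(p_k, q_k) exist, and C₅·f₀·L_S ≤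 L ≤ C₄·f₀·L_S. -/
open Filter Topology

theorem IsMetric.exists_lim {X : Type*} {d : X → X → ℝ} (hd : IsMetric d) (p q : ℕ → X)
    (hpC : ∀ ε : ℝ, 0 < ε → ∃ N : ℕ, ∀ j k : ℕ, N ≤ j → N ≤ k → d (p j) (p k) < ε)
    (hqC : ∀ ε : ℝ, 0 < ε → ∃ N : ℕ, ∀ j k : ℕ, N ≤ j → N ≤ k → d (q j) (q k) < ε) :
    ∃ L : ℝ, Tendsto (fun k => d (p k) (q k)) atTop (𝓝 L) := by
  obtain ⟨_, _, _, hs, ht⟩ := hd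
  apply cauchySeq_tendsto_of_complete
  rw [Metric.cauchySeq_iff]
  intro ε hε
  obtain ⟨N₁, h₁⟩ := hpC (ε / 2) (by linarith)
  obtain ⟨N₂, h₂⟩ := hqC (ε / 2) (by linarith)
  refine ⟨max N₁ N₂, fun j hj k hk => ?_⟩
  have a1 := h₁ j k (le_of_max_le_left hj) (le_of_max_le_left hk)
  have a2 := h₂ j k (le_of_max_le_right hj) (le_of_max_le_right hk)
  rw [Real.dist_eq, abs_lt]
  have b1 := ht (p j) (p k) (q j)
  have b2 := ht (p k) (q k) (q j)
  have b3 := ht (p k) (p j) (q k)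
  have b4 := ht (p j) (q j) (q k)
  have c1 := hs (p j) (p k)
  have c2 := hs (q j) (q k)
  constructor <;> linarith

/-- Under (F4), (F5), bounded warping with minimal limit `f₀ = f_inf` at a
finite boundary time `t₀`, the completed distance between limits of Cauchy sequences with
times tending to `t₀` is pinched between `C₅·f₀` and `C₄·f₀` times the limit spatial
distance. -/
theorem completed_slice_bounds {S : Type*} (dS : S → S → ℝ) (hdS : IsMetric dS)
    (a b : EReal) (hab : a < b)
    (f : ℝ → ℝ) (hf : ∀ t : ℝ, a < (t : EReal) → (t : EReal) < b → 0 < f t)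
    (d : GRWPoint a b S → GRWPoint a b S → ℝ) (hd : IsMetric d)
    (C₄ C₅ : ℝ) (hC₄ : 0 < C₄) (hC₅ : 0 < C₅)
    (hF4 : ∀ p q : GRWPoint a b S, ∀ c : ℝ, a < (c : EReal) → (c : EReal) < b →
      d p q ≤ C₄ * (|(p.1 : ℝ) - c| + f c * dS p.2 q.2 + |(q.1 : ℝ) - c|))
    (hF5 : ∀ p q : GRWPoint a b S,
      C₅ * sInf (f '' {t : ℝ | a < (t : EReal) ∧ (t : EReal) < b}) * dS p.2 q.2 ≤ d p q)
    (hinf : 0 < sInf (f '' {t : ℝ | a < (t : EReal) ∧ (t : EReal) < b}))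
    (hsup : BddAbove (f '' {t : ℝ | a < (t : EReal) ∧ (t : EReal) < b}))
    (t₀ : ℝ) (ht₀ : t₀ ∈ closure {t : ℝ | a < (t : EReal) ∧ (t : EReal) < b})
    (f₀ : ℝ)
    (hf₀ : Tendsto f (𝓝[{t : ℝ | a < (t : EReal) ∧ (t : EReal) < b}] t₀) (𝓝 f₀))
    (hf₀min : f₀ = sInf (f '' {t : ℝ | a < (t : EReal) ∧ (t : EReal) < b}))
    (p q : ℕ → GRWPoint a b S)
    (hpC : ∀ ε : ℝ, 0 < ε → ∃ N : ℕ, ∀ j k : ℕ, N ≤ j → N ≤ k → d (p j) (p k) < ε)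
    (hqC : ∀ ε : ℝ, 0 < ε → ∃ N : ℕ, ∀ j k : ℕ, N ≤ j → N ≤ k → d (q j) (q k) < ε)
    (hpt : Tendsto (fun k => ((p k).1 : ℝ)) atTop (𝓝 t₀))
    (hqt : Tendsto (fun k => ((q k).1 : ℝ)) atTop (𝓝 t₀)) :
    ∃ LS L : ℝ,
      Tendsto (fun k => dS (p k).2 (q k).2) atTop (𝓝 LS) ∧
      Tendsto (fun k => d (p k) (q k)) atTop (𝓝 L) ∧
      C₅ * f₀ * LS ≤ L ∧ L ≤ C₄ * f₀ * LS := by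
  have hpos : 0 < C₅ * f₀ := by rw [hf₀min]; exact mul_pos hC₅ hinf
  rw [← hf₀min] at hF5
  have key : ∀ r : ℕ → GRWPoint a b S,
      (∀ ε : ℝ, 0 < ε → ∃ N : ℕ, ∀ j k : ℕ, N ≤ j → N ≤ k → d (r j) (r k) < ε) →
      (∀ ε : ℝ, 0 < ε → ∃ N : ℕ, ∀ j k : ℕ, N ≤ j → N ≤ k → dS (r j).2 (r k).2 < ε) := by
    intro r hr ε hε
    obtain ⟨N, hN⟩ := hr (C₅ * f₀ * ε) (mul_pos hpos hε)
    refine ⟨N, fun j k hj hk => ?_⟩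
    exact lt_of_mul_lt_mul_left (lt_of_le_of_lt (hF5 _ _) (hN j k hj hk)) hpos.le
  obtain ⟨L, hL⟩ := hd.exists_lim p q hpC hqC
  obtain ⟨LS, hLS⟩ := hdS.exists_lim (fun k => (p k).2) (fun k => (q k).2) (key p hpC) (key q hqC)
  refine ⟨LS, L, hLS, hL, ?_, ?_⟩
  · exact le_of_tendsto_of_tendsto' (hLS.const_mul _) hL (fun k => hF5 _ _)
  · have hfp : Tendsto (fun k => f ((p k).1 : ℝ)) atTop (𝓝 f₀) :=
      hf₀.comp (tendsto_nhdsWithin_iff.2 ⟨hpt, Eventually.of_forall fun k => (p k).1.2⟩)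
    have h := (((hpt.sub hpt).abs.add (hfp.mul hLS)).add (hqt.sub hpt).abs).const_mul C₄
    have h2 := le_of_tendsto_of_tendsto' hL h
      (fun k => hF4 (p k) (q k) (p k).1 (p k).1.2.1 (p k).1.2.2)
    simpa [mul_assoc] using h2
end

section
/- Let d be a metric on M = (0,b) × S as in the past-finite GRW setup, with diam(S) > 0 (S contains two points at positive distance), and suppose d satisfies (F4) and (F6). For t ∈ (0,b] let M_t := (0,t) × S and let diam(M_t) denote its diameter with respect to d. Then the following are equivalent: (S1) there exists a sequence t_k → 0⁺ in (0,b) with f(t_k) → 0; (S2) diam(M_t) → 0 as t → 0⁺. -/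
open Filter Topology ENNReal

/-- The underlying set `M = (0,b) × S` of a past-finite GRW spacetime, `0 < b ≤ ∞`. -/
abbrev GRWPoint0 (b : EReal) (S : Type*) : Type _ :=
  {t : ℝ // 0 < t ∧ (t : EReal) < b} × S

/-- For a GRW-faithful distance (satisfying (F4) and (F6)) on a past-finite
GRW spacetime with `diam S > 0`, sequential pinching `f(t_k) → 0` along some `t_k → 0⁺`
is equivalent to the diameters of the early universes `M_t = (0,t) × S` shrinking to zero. -/
theorem sequential_pinching_iff_diam {S : Type*} (dS : S → S → ℝ) (hdS : IsMetric dS)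
    (hSpos : ∃ x y : S, 0 < dS x y)
    (b : EReal) (hb : (0 : EReal) < b)
    (f : ℝ → ℝ) (hf : ∀ t : ℝ, 0 < t → (t : EReal) < b → 0 < f t)
    (d : GRWPoint0 b S → GRWPoint0 b S → ℝ) (hd : IsMetric d)
    (C₄ C₆ : ℝ) (hC₄ : 0 < C₄) (hC₆ : 0 < C₆)
    (hF4 : ∀ p q : GRWPoint0 b S, ∀ c : ℝ, 0 < c → (c : EReal) < b →
      d p q ≤ C₄ * (|(p.1 : ℝ) - c| + f c * dS p.2 q.2 + |(q.1 : ℝ) - c|))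
    (hF6 : ∀ t₁ t₂ : ℝ, 0 ≤ t₁ → (t₂ : EReal) ≤ b → t₁ < t₂ →
      ∀ p q : GRWPoint0 b S, t₁ < (p.1 : ℝ) → (p.1 : ℝ) < t₂ →
        t₁ < (q.1 : ℝ) → (q.1 : ℝ) < t₂ →
      (C₆ : EReal) * min (exitCost (0 : EReal) b t₁ t₂ (p.1 : ℝ) (q.1 : ℝ))
          ((sInf (f '' Set.Ioo t₁ t₂) * dS p.2 q.2 : ℝ) : EReal) ≤ ((d p q : ℝ) : EReal)) :
    (∃ tseq : ℕ → ℝ, (∀ k, 0 < tseq k ∧ ((tseq k : ℝ) : EReal) < b) ∧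
        Tendsto tseq atTop (𝓝 0) ∧ Tendsto (fun k => f (tseq k)) atTop (𝓝 0)) ↔
    Tendsto (fun t : ℝ => ⨆ (p : GRWPoint0 b S) (q : GRWPoint0 b S)
        (_ : (p.1 : ℝ) < t) (_ : (q.1 : ℝ) < t), ENNReal.ofReal (d p q))
      (𝓝[>] (0 : ℝ)) (𝓝 0) := by
  obtain ⟨hd0, -, -, -, -⟩ := hd
  constructor
  · rintro ⟨u, hu, hu0, hfu⟩
    have key : ∀ p q : GRWPoint0 b S, d p q ≤ C₄ * ((p.1 : ℝ) + (q.1 : ℝ)) := by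
      intro p q
      have h1 : Tendsto (fun k => C₄ * (|(p.1 : ℝ) - u k| + f (u k) * dS p.2 q.2
          + |(q.1 : ℝ) - u k|)) atTop
          (𝓝 (C₄ * (|(p.1 : ℝ) - 0| + 0 * dS p.2 q.2 + |(q.1 : ℝ) - 0|))) :=
        ((((tendsto_const_nhds.sub hu0).abs).add (hfu.mul_const _)).add
          ((tendsto_const_nhds.sub hu0).abs)).const_mul C₄
      have h2 := ge_of_tendsto' h1 (fun k => hF4 p q (u k) (hu k).1 (hu k).2)
      simpa [abs_of_pos p.1.2.1, abs_of_pos q.1.2.1] using h2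
    have hlim : Tendsto (fun t : ℝ => ENNReal.ofReal (C₄ * (t + t))) (𝓝[>] (0 : ℝ)) (𝓝 0) := by
      have h3 : Continuous (fun t : ℝ => ENNReal.ofReal (C₄ * (t + t))) := by
        apply ENNReal.continuous_ofReal.comp
        fun_prop
      have h4 := h3.tendsto 0
      simp only [add_zero, mul_zero, ENNReal.ofReal_zero] at h4
      exact h4.mono_left nhdsWithin_le_nhds
    refine tendsto_of_tendsto_of_tendsto_of_le_of_le tendsto_const_nhds hlim
      (fun _ => zero_le) (fun t => ?_)
    refine iSup_le fun p => iSup_le fun q => iSup_le fun hp => iSup_le fun hq => ?_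
    apply ENNReal.ofReal_le_ofReal
    exact (key p q).trans (mul_le_mul_of_nonneg_left (by linarith) hC₄.le)
  · intro hT
    obtain ⟨x, y, hxy⟩ := hSpos
    obtain ⟨b', hb'0, hb'b⟩ := EReal.lt_iff_exists_real_btwn.1 hb
    have hb'pos : 0 < b' := by exact_mod_cast hb'0
    have main : ∀ ε : ℝ, 0 < ε → ∃ t : ℝ, 0 < t ∧ (t : EReal) < b ∧ t < ε ∧ f t < ε := by
      intro ε hε
      by_contra! hcon
      have hδ : 0 < min ε b' := lt_min hε hb'pos
      set δ := min ε b' with hδdef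
      have hltb : ∀ t : ℝ, t ≤ δ → (t : EReal) < b := fun t ht =>
        lt_of_le_of_lt (by exact_mod_cast ht.trans (min_le_right _ _)) hb'b
      have hinf : ε ≤ sInf (f '' Set.Ioo 0 δ) := by
        apply le_csInf
        · exact (Set.nonempty_Ioo.2 hδ).image f
        · rintro _ ⟨t, ⟨ht0, ht1⟩, rfl⟩
          exact hcon t ht0 (hltb t ht1.le) (lt_of_lt_of_le ht1 (min_le_left _ _))
      have hm : 0 < C₆ * min δ (ε * dS x y) := mul_pos hC₆ (lt_min hδ (mul_pos hε hxy))
      have hev := hT.eventually (gt_mem_nhds (ENNReal.ofReal_pos.2 hm))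
      obtain ⟨t, ht, ht0⟩ := (hev.and self_mem_nhdsWithin).exists
      have ht0 : 0 < t := ht0
      let s : ℝ := min t δ / 2
      have hmin : 0 < min t δ := lt_min ht0 hδ
      have hs0 : 0 < s := half_pos hmin
      have hst : s < t := (half_lt_self hmin).trans_le (min_le_left _ _)
      have hsd : s ≤ δ / 2 := div_le_div_of_nonneg_right (min_le_right _ _) (by norm_num)
      have hsδ : s < δ := by linarith
      let s' : {t : ℝ // 0 < t ∧ (t : EReal) < b} := ⟨s, hs0, hltb s hsδ.le⟩
      have h6 := hF6 0 δ le_rfl (hltb δ le_rfl).le hδ (s', x) (s', y) hs0 hsδ hs0 hsδ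
      have hE : exitCost (0 : EReal) b 0 δ s s = ((2 * δ - s - s : ℝ) : EReal) := by
        unfold exitCost
        rw [if_neg (by simp), if_pos (hltb δ le_rfl)]
      simp only [s', hE] at h6
      rw [← EReal.coe_strictMono.monotone.map_min, ← EReal.coe_mul, EReal.coe_le_coe_iff] at h6
      have h7 : C₆ * min δ (ε * dS x y) ≤ d (s', x) (s', y) := by
        refine le_trans (mul_le_mul_of_nonneg_left (min_le_min ?_ ?_) hC₆.le) h6
        · linarith
        · exact mul_le_mul_of_nonneg_right hinf hxy.le
      have h8 := ENNReal.ofReal_le_ofReal h7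
      refine absurd ht (not_lt.2 (h8.trans ?_))
      exact le_iSup_of_le (s', x) (le_iSup_of_le (s', y)
        (le_iSup_of_le hst (le_iSup_of_le hst le_rfl)))
    choose u hu using fun n : ℕ => main (1 / ((n : ℝ) + 1)) (by positivity)
    refine ⟨u, fun k => ⟨(hu k).1, (hu k).2.1⟩, ?_, ?_⟩
    · exact squeeze_zero (fun k => (hu k).1.le) (fun k => (hu k).2.2.1.le)
        tendsto_one_div_add_atTop_nhds_zero_nat
    · exact squeeze_zero (fun k => (hf _ (hu k).1 (hu k).2.1).le) (fun k => (hu k).2.2.2.le)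
        tendsto_one_div_add_atTop_nhds_zero_nat
end

section
/- Let d be a metric on M = (0,b) × S as in the past-finite GRW setup, with S nonempty, and suppose d satisfies (F4) with constant C₄. Let (M̄, d̄) denote the metric completion of (M,d), with M identified with its dense image, and suppose the time function τ(t,x) = t admits a continuous extension τ̄ : M̄ → ℝ. For t ∈ (0,b] let M_t := (0,t) × S and let diam(M_t) denote its diameter with respect to d. Then diam(M_t) → 0 as t → 0⁺ if and only if the fiber τ̄⁻¹(0) ⊆ M̄ consists of exactly one point. -/
open Filter Topology ENNReal

/-- For a GRW-faithful distance (satisfying (F4)) on a past-finite GRW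
spacetime, the diameters of the early universes `M_t` shrink to zero as `t → 0⁺` iff the
fiber `τ̄⁻¹(0)` in the metric completion is a single (big bang) point. -/
theorem diam_shrinks_iff_single_bang {S : Type*} [Nonempty S]
    (dS : S → S → ℝ) (hdS : IsMetric dS)
    (b : EReal) (hb : (0 : EReal) < b)
    (f : ℝ → ℝ) (hf : ∀ t : ℝ, 0 < t → (t : EReal) < b → 0 < f t)
    (d : GRWPoint0 b S → GRWPoint0 b S → ℝ) (hd : IsMetric d)
    (C₄ : ℝ) (hC₄ : 0 < C₄)
    (hF4 : ∀ p q : GRWPoint0 b S, ∀ c : ℝ, 0 < c → (c : EReal) < b →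
      d p q ≤ C₄ * (|(p.1 : ℝ) - c| + f c * dS p.2 q.2 + |(q.1 : ℝ) - c|))
    {Mbar : Type*} [MetricSpace Mbar] [CompleteSpace Mbar]
    (ι : GRWPoint0 b S → Mbar) (hdense : DenseRange ι)
    (hiso : ∀ p q : GRWPoint0 b S, dist (ι p) (ι q) = d p q)
    (τbar : Mbar → ℝ) (hτcont : Continuous τbar)
    (hτext : ∀ p : GRWPoint0 b S, τbar (ι p) = (p.1 : ℝ)) :
    Tendsto (fun t : ℝ => ⨆ (p : GRWPoint0 b S) (q : GRWPoint0 b S)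
        (_ : (p.1 : ℝ) < t) (_ : (q.1 : ℝ) < t), ENNReal.ofReal (d p q))
      (𝓝[>] (0 : ℝ)) (𝓝 0) ↔
    ∃ x : Mbar, τbar ⁻¹' {0} = {x} := by
  obtain ⟨hd0, hdd, -, hdsymm, -⟩ := hd
  have hvert : ∀ p q : GRWPoint0 b S, p.2 = q.2 →
      dist (ι p) (ι q) ≤ C₄ * |(p.1 : ℝ) - (q.1 : ℝ)| := by
    intro p q hpq
    have h := hF4 p q q.1 q.1.2.1 q.1.2.2
    rw [hpq, hdS.2.1] at h
    rw [hiso]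
    simpa using h
  obtain ⟨a, ha0, hab⟩ := EReal.lt_iff_exists_real_btwn.1 hb
  have ha : 0 < a := by exact_mod_cast ha0
  have hlim : Tendsto (fun n : ℕ => a / ((n : ℝ) + 1)) atTop (𝓝 0) := by
    have := (tendsto_one_div_add_atTop_nhds_zero_nat (𝕜 := ℝ)).const_mul a
    simpa [div_eq_mul_inv] using this
  have hmem : ∀ n : ℕ, 0 < a / ((n : ℝ) + 1) ∧ ((a / ((n : ℝ) + 1) : ℝ) : EReal) < b := by
    intro n
    refine ⟨by positivity, lt_of_le_of_lt ?_ hab⟩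
    rw [EReal.coe_le_coe_iff]
    apply div_le_self ha.le
    have : (0 : ℝ) ≤ n := Nat.cast_nonneg n
    linarith
  have hβ : ∀ x : S, ∃ y : Mbar, τbar y = 0 ∧
      ∀ p : GRWPoint0 b S, p.2 = x → dist (ι p) y ≤ C₄ * (p.1 : ℝ) := by
    intro x
    let u : ℕ → GRWPoint0 b S := fun n => (⟨a / ((n : ℝ) + 1), hmem n⟩, x)
    have hc : CauchySeq (fun n => ι (u n)) := by
      rw [Metric.cauchySeq_iff]
      intro ε hε
      obtain ⟨N, hN⟩ := Metric.cauchySeq_iff.1 hlim.cauchySeq (ε / C₄) (by positivity)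
      refine ⟨N, fun m hm n hn => ?_⟩
      have h1 := hN m hm n hn
      rw [Real.dist_eq, lt_div_iff₀ hC₄] at h1
      have h2 := hvert (u m) (u n) rfl
      simp only [u] at h2 ⊢
      linarith
    obtain ⟨y, hy⟩ := cauchySeq_tendsto_of_complete hc
    refine ⟨y, ?_, ?_⟩
    · have h1 := (hτcont.tendsto y).comp hy
      refine tendsto_nhds_unique h1 ?_
      have : (τbar ∘ fun n => ι (u n)) = fun n : ℕ => a / ((n : ℝ) + 1) := by
        funext n
        simp [hτext, u]
      rw [this]
      exact hlim
    · intro p hp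
      have h1 : Tendsto (fun n => dist (ι p) (ι (u n))) atTop (𝓝 (dist (ι p) y)) :=
        tendsto_const_nhds.dist hy
      have h2 : Tendsto (fun n : ℕ => C₄ * |(p.1 : ℝ) - a / ((n : ℝ) + 1)|) atTop
          (𝓝 (C₄ * |(p.1 : ℝ) - 0|)) := ((tendsto_const_nhds.sub hlim).abs).const_mul C₄
      rw [sub_zero, abs_of_pos p.1.2.1] at h2
      exact le_of_tendsto_of_tendsto' h1 h2 (fun n => hvert p (u n) hp)
  constructor
  · intro h
    obtain ⟨x₀⟩ := ‹Nonempty S›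
    obtain ⟨y, hy0, -⟩ := hβ x₀
    refine ⟨y, ?_⟩
    ext z
    simp only [Set.mem_preimage, Set.mem_singleton_iff]
    refine ⟨fun hz => ?_, fun hz => hz ▸ hy0⟩
    apply eq_of_forall_dist_le
    intro ε hε
    have hε3 : 0 < ε / 3 := by positivity
    have he : ∀ᶠ t in 𝓝[>] (0 : ℝ), (⨆ (p : GRWPoint0 b S) (q : GRWPoint0 b S)
        (_ : (p.1 : ℝ) < t) (_ : (q.1 : ℝ) < t), ENNReal.ofReal (d p q))
          < ENNReal.ofReal (ε / 3) :=
      h.eventually_lt_const (ENNReal.ofReal_pos.2 hε3)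
    obtain ⟨t, ht, ht0⟩ := (he.and self_mem_nhdsWithin).exists
    have ht0 : 0 < t := ht0
    have hnear : ∀ w : Mbar, τbar w = 0 →
        ∃ p : GRWPoint0 b S, dist w (ι p) < ε / 3 ∧ (p.1 : ℝ) < t := by
      intro w hw
      have hopen : IsOpen (Metric.ball w (ε / 3) ∩ τbar ⁻¹' Set.Iio t) :=
        Metric.isOpen_ball.inter (isOpen_Iio.preimage hτcont)
      obtain ⟨p, hp1, hp2⟩ := hdense.exists_mem_open hopen
        ⟨w, Metric.mem_ball_self hε3, by simpa [hw] using ht0⟩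
      refine ⟨p, ?_, ?_⟩
      · rw [dist_comm]; exact hp1
      · simpa [hτext] using hp2
    obtain ⟨p, hp1, hp2⟩ := hnear z hz
    obtain ⟨q, hq1, hq2⟩ := hnear y hy0
    have h3 : ENNReal.ofReal (d p q) < ENNReal.ofReal (ε / 3) := by
      refine lt_of_le_of_lt ?_ ht
      exact le_iSup_of_le p (le_iSup_of_le q (le_iSup_of_le hp2 (le_iSup_of_le hq2 le_rfl)))
    have h4 : d p q < ε / 3 := (ENNReal.ofReal_lt_ofReal_iff hε3).1 h3
    rw [← hiso] at h4
    have h5 := dist_triangle4 z (ι p) (ι q) y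
    rw [dist_comm (ι q) y] at h5
    linarith
  · rintro ⟨y, hy⟩
    have hbd : ∀ p : GRWPoint0 b S, dist (ι p) y ≤ C₄ * (p.1 : ℝ) := by
      intro p
      obtain ⟨z, hz0, hz⟩ := hβ p.2
      have : z ∈ τbar ⁻¹' {0} := hz0
      rw [hy, Set.mem_singleton_iff] at this
      exact this ▸ hz p rfl
    have hup : Tendsto (fun t : ℝ => ENNReal.ofReal (2 * C₄ * t)) (𝓝[>] (0 : ℝ)) (𝓝 0) := by
      have : Tendsto (fun t : ℝ => ENNReal.ofReal (2 * C₄ * t)) (𝓝 0)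
          (𝓝 (ENNReal.ofReal (2 * C₄ * 0))) :=
        (ENNReal.continuous_ofReal.comp (continuous_const.mul continuous_id)).tendsto 0
      rw [mul_zero, ENNReal.ofReal_zero] at this
      exact this.mono_left nhdsWithin_le_nhds
    refine tendsto_of_tendsto_of_tendsto_of_le_of_le tendsto_const_nhds hup
      (fun _ => zero_le) (fun t => ?_)
    refine iSup_le fun p => iSup_le fun q => iSup_le fun hp => iSup_le fun hq => ?_
    apply ENNReal.ofReal_le_ofReal
    rw [← hiso]
    have h1 := dist_triangle_right (ι p) (ι q) y
    have h2 := hbd p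
    have h3 := hbd q
    nlinarith [mul_lt_mul_of_pos_left hp hC₄, mul_lt_mul_of_pos_left hq hC₄]
end

section
/- Let 0 < b ≤ ∞, let (S,d_S) be a metric space with 0 < diam(S) < ∞, and let f : (0,b) → (0,∞) be a continuous positive function. For 0 ≤ u < v ≤ b let M_{(u,v)} := (u,v) × S, and suppose for each such pair (u,v) we are given a metric d_{(u,v)} on M_{(u,v)} satisfying the GRW faithfulness conditions (F4) and (F6) on M_{(u,v)} (with warping function f restricted to (u,v) and with interval endpoints a = u, b = v) with constants C₄, C₆ > 0 independent of u and v; let diam_int(M_{(u,v)}) denote the diameter of M_{(u,v)} with respect to d_{(u,v)}. Then the following are equivalent: (U1) f(t) → 0 as t → 0⁺; (U2) sup{diam_int(M_{(u,v)}) : 0 ≤ u < v ≤ t} → 0 as t → 0⁺. -/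
open Filter Topology ENNReal

/-- Spatially finite, GRW faithful uniform pinching: for a uniformly
GRW-faithful family of intrinsic metrics `d_{(u,v)}` on the slabs `M_{(u,v)} = (u,v) × S`
(satisfying (F4) and (F6) with constants independent of `u,v`), with `0 < diam S < ∞` and
`f` continuous, the warping function tends to `0` at `0⁺` iff the supremum of the
intrinsic diameters of all slabs below time `t` tends to `0` as `t → 0⁺`. -/
theorem uniform_pinching_iff_intrinsic_diam {S : Type*} (dS : S → S → ℝ)
    (hdS_self : ∀ x : S, dS x x = 0) (hdS_symm : ∀ x y : S, dS x y = dS y x)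
    (hdS_triangle : ∀ x y z : S, dS x z ≤ dS x y + dS y z)
    (hdS_def : ∀ x y : S, dS x y = 0 → x = y)
    (hSpos : ∃ x y : S, 0 < dS x y) (hSbdd : ∃ C : ℝ, ∀ x y : S, dS x y ≤ C)
    (b : EReal) (hb : (0 : EReal) < b)
    (f : ℝ → ℝ) (hfpos : ∀ t : ℝ, 0 < t → (t : EReal) < b → 0 < f t)
    (hfcont : ContinuousOn f {t : ℝ | 0 < t ∧ (t : EReal) < b})
    (D : ℝ → ℝ → (ℝ × S → ℝ × S → ℝ))
    (C₄ C₆ : ℝ) (hC₄ : 0 < C₄) (hC₆ : 0 < C₆)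
    (hmetric : ∀ u v : ℝ, 0 ≤ u → u < v → (v : EReal) ≤ b →
      (∀ p : ℝ × S, u < p.1 → p.1 < v → D u v p p = 0) ∧
      (∀ p q : ℝ × S, u < p.1 → p.1 < v → u < q.1 → q.1 < v →
        (0 ≤ D u v p q ∧ D u v p q = D u v q p ∧ (D u v p q = 0 → p = q))) ∧
      (∀ p q r : ℝ × S, u < p.1 → p.1 < v → u < q.1 → q.1 < v → u < r.1 → r.1 < v →
        D u v p r ≤ D u v p q + D u v q r))
    (hF4 : ∀ u v : ℝ, 0 ≤ u → u < v → (v : EReal) ≤ b →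
      ∀ p q : ℝ × S, u < p.1 → p.1 < v → u < q.1 → q.1 < v → ∀ c : ℝ, u < c → c < v →
        D u v p q ≤ C₄ * (|p.1 - c| + f c * dS p.2 q.2 + |q.1 - c|))
    (hF6 : ∀ u v : ℝ, 0 ≤ u → u < v → (v : EReal) ≤ b →
      ∀ t₁ t₂ : ℝ, u ≤ t₁ → t₁ < t₂ → t₂ ≤ v →
      ∀ p q : ℝ × S, t₁ < p.1 → p.1 < t₂ → t₁ < q.1 → q.1 < t₂ →
        (C₆ : EReal) * min (exitCost (u : EReal) (v : EReal) t₁ t₂ p.1 q.1)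
          ((sInf (f '' Set.Ioo t₁ t₂) * dS p.2 q.2 : ℝ) : EReal) ≤ ((D u v p q : ℝ) : EReal)) :
    Tendsto f (𝓝[>] (0 : ℝ)) (𝓝 0) ↔
    Tendsto (fun t : ℝ => ⨆ (u : ℝ) (v : ℝ) (_ : 0 ≤ u) (_ : u < v) (_ : v ≤ t),
        ⨆ (p : ℝ × S) (q : ℝ × S) (_ : u < p.1) (_ : p.1 < v) (_ : u < q.1) (_ : q.1 < v),
          ENNReal.ofReal (D u v p q))
      (𝓝[>] (0 : ℝ)) (𝓝 0) := by
  obtain ⟨r, hr0', hrb⟩ := EReal.lt_iff_exists_real_btwn.1 hb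
  have hr0 : 0 < r := by exact_mod_cast hr0'
  have hltb : ∀ t : ℝ, t < r → (t : EReal) < b := fun t ht =>
    lt_trans (by exact_mod_cast ht) hrb
  constructor
  · intro hf
    obtain ⟨C, hC⟩ := hSbdd
    obtain ⟨x0, y0, hxy⟩ := hSpos
    have hCpos : 0 < C := lt_of_lt_of_le hxy (hC _ _)
    rw [ENNReal.tendsto_nhds_zero]
    intro ε hε
    by_cases hεt : ε = ⊤
    · subst hεt
      exact Eventually.of_forall fun _ => le_top
    have he : 0 < ε.toReal := ENNReal.toReal_pos hε.ne' hεt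
    set e := ε.toReal with hedef
    have h1 : ∀ᶠ t in 𝓝[>] (0 : ℝ), f t < e / (2 * C₄ * C) :=
      hf.eventually (gt_mem_nhds (by positivity))
    obtain ⟨δ, hδ, hδf⟩ := mem_nhdsGT_iff_exists_Ioo_subset.1 h1
    have hδ0 : (0 : ℝ) < δ := hδ
    have hm : 0 < min (min δ r) (e / (4 * C₄)) := by positivity
    filter_upwards [Ioo_mem_nhdsGT hm] with t ht
    have ht1 : t < δ := lt_of_lt_of_le ht.2 ((min_le_left _ _).trans (min_le_left _ _))
    have ht2 : t < r := lt_of_lt_of_le ht.2 ((min_le_left _ _).trans (min_le_right _ _))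
    have ht3 : t < e / (4 * C₄) := lt_of_lt_of_le ht.2 (min_le_right _ _)
    refine iSup_le fun u => iSup_le fun v => iSup_le fun hu => iSup_le fun huv =>
      iSup_le fun hvt => iSup_le fun p => iSup_le fun q => iSup_le fun hp1 => iSup_le fun hp2 =>
      iSup_le fun hq1 => iSup_le fun hq2 => ?_
    apply ENNReal.ofReal_le_of_le_toReal
    have hvb : (v : EReal) ≤ b := (hltb v (by linarith)).le
    have hD := hF4 u v hu huv hvb p q hp1 hp2 hq1 hq2 ((u + v) / 2) (by linarith) (by linarith)
    have hfc : f ((u + v) / 2) < e / (2 * C₄ * C) :=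
      hδf ⟨by linarith, by linarith⟩
    have hfc0 : 0 < f ((u + v) / 2) := hfpos _ (by linarith) (hltb _ (by linarith))
    have ha : |p.1 - (u + v) / 2| ≤ t := abs_le.2 ⟨by linarith, by linarith⟩
    have hb' : |q.1 - (u + v) / 2| ≤ t := abs_le.2 ⟨by linarith, by linarith⟩
    have hfd : f ((u + v) / 2) * dS p.2 q.2 ≤ e / (2 * C₄ * C) * C :=
      (mul_le_mul_of_nonneg_left (hC _ _) hfc0.le).trans
        (mul_le_mul_of_nonneg_right hfc.le hCpos.le)
    calc D u v p q ≤ _ := hD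
      _ ≤ C₄ * (e / (4 * C₄) + e / (2 * C₄ * C) * C + e / (4 * C₄)) :=
        mul_le_mul_of_nonneg_left (by linarith) hC₄.le
      _ = e := by field_simp; ring
  · intro hg
    obtain ⟨x, y, hxy⟩ := hSpos
    rw [ENNReal.tendsto_nhds_zero] at hg
    rw [Metric.tendsto_nhds]
    intro e he
    have h1 := hg (ENNReal.ofReal (C₆ * dS x y * e / 4)) (ENNReal.ofReal_pos.2 (by positivity))
    obtain ⟨δ, hδ, hδf⟩ := mem_nhdsGT_iff_exists_Ioo_subset.1 h1
    have hδ0 : (0 : ℝ) < δ := hδ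
    have hm : 0 < min δ r / 2 := by positivity
    filter_upwards [Ioo_mem_nhdsGT hm] with s hs
    have hs0 : 0 < s := hs.1
    have hs1 : 2 * s < δ := by have := hs.2; have := min_le_left δ r; linarith
    have hs2 : 2 * s < r := by have := hs.2; have := min_le_right δ r; linarith
    have hfs : 0 < f s := hfpos s hs0 (hltb s (by linarith))
    have hcont : ContinuousAt f s := by
      apply hfcont.continuousAt
      filter_upwards [Ioo_mem_nhds hs0 (show s < r by linarith)] with z hz
      exact ⟨hz.1, hltb z hz.2⟩
    have hev : ∀ᶠ z in 𝓝 s, f s / 2 < f z := hcont.eventually (lt_mem_nhds (by linarith))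
    obtain ⟨η, hη, hηf⟩ := Metric.eventually_nhds_iff.1 hev
    obtain ⟨k, hk0, hkη, hks⟩ : ∃ k : ℝ, 0 < k ∧ k ≤ η ∧ k ≤ s :=
      ⟨min η s, lt_min hη hs0, min_le_left _ _, min_le_right _ _⟩
    have hinf : f s / 2 ≤ sInf (f '' Set.Ioo (s - k) (s + k)) := by
      apply le_csInf
      · exact ⟨f s, s, ⟨by linarith, by linarith⟩, rfl⟩
      · rintro _ ⟨z, hz, rfl⟩
        refine (hηf ?_).le
        rw [Real.dist_eq, abs_lt]
        exact ⟨by linarith [hz.1], by linarith [hz.2]⟩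
    have h6 := hF6 (s - k) (s + k) (by linarith) (by linarith) (hltb _ (by linarith)).le
      (s - k) (s + k) le_rfl (by linarith) le_rfl (s, x) (s, y)
      (by simpa using hk0) (by simpa using hk0) (by simpa using hk0) (by simpa using hk0)
    simp only [exitCost, lt_irrefl, if_false, min_eq_right le_top] at h6
    rw [← EReal.coe_mul, EReal.coe_le_coe_iff] at h6
    have hsup : ENNReal.ofReal (D (s - k) (s + k) (s, x) (s, y)) ≤
        ENNReal.ofReal (C₆ * dS x y * e / 4) := by
      refine le_trans ?_ (hδf (show 2 * s ∈ Set.Ioo 0 δ from ⟨by linarith, hs1⟩))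
      refine le_iSup_of_le (s - k) (le_iSup_of_le (s + k) (le_iSup_of_le (by linarith)
        (le_iSup_of_le (by linarith) (le_iSup_of_le (by linarith) (le_iSup_of_le (s, x)
        (le_iSup_of_le (s, y) (le_iSup_of_le ?_ (le_iSup_of_le ?_ (le_iSup_of_le ?_
        (le_iSup_of_le ?_ le_rfl))))))))))
      all_goals simpa using hk0
    have hD := (ENNReal.ofReal_le_ofReal_iff (by positivity)).1 hsup
    have h7 : C₆ * (f s / 2 * dS x y) ≤ C₆ * dS x y * e / 4 :=
      (mul_le_mul_of_nonneg_left (mul_le_mul_of_nonneg_right hinf hxy.le) hC₆.le).trans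
        (h6.trans hD)
    rw [Real.dist_eq, sub_zero, abs_of_pos hfs]
    have hpos : 0 < C₆ * dS x y := by positivity
    by_contra hcon
    push Not at hcon
    nlinarith [mul_le_mul_of_nonneg_left hcon hpos.le, mul_pos hpos he]
end

section
/- Let d be a metric on M = (0,b) × S as in the past-finite GRW setup, with S nonempty, and suppose d satisfies (F2). Let (M̄, d̄) denote the metric completion of (M,d), with M identified with its dense image, and suppose the time function τ(t,x) = t admits a continuous extension τ̄ : M̄ → ℝ. Then the 'initial singularity' τ̄⁻¹(0) is a nonempty subset of M̄ ∖ M: there exists x̄ ∈ M̄ with τ̄(x̄) = 0, and every such x̄ lies outside the image of M. -/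
open Filter Topology

/-- For a distance satisfying (F2) on a past-finite GRW spacetime, the
initial singularity `τ̄⁻¹(0)` in the metric completion is a nonempty subset of
`M̄ ∖ M`. -/
theorem initial_singularity_nonempty {S : Type*} [Nonempty S]
    (dS : S → S → ℝ) (hdS : IsMetric dS)
    (b : EReal) (hb : (0 : EReal) < b)
    (f : ℝ → ℝ) (hf : ∀ t : ℝ, 0 < t → (t : EReal) < b → 0 < f t)
    (d : GRWPoint0 b S → GRWPoint0 b S → ℝ) (hd : IsMetric d)
    (C₂ : ℝ) (hC₂ : 0 < C₂)
    (hF2 : ∀ p q : GRWPoint0 b S, p.2 = q.2 → d p q ≤ C₂ * |(q.1 : ℝ) - (p.1 : ℝ)|)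
    {Mbar : Type*} [MetricSpace Mbar] [CompleteSpace Mbar]
    (ι : GRWPoint0 b S → Mbar) (hdense : DenseRange ι)
    (hiso : ∀ p q : GRWPoint0 b S, dist (ι p) (ι q) = d p q)
    (τbar : Mbar → ℝ) (hτcont : Continuous τbar)
    (hτext : ∀ p : GRWPoint0 b S, τbar (ι p) = (p.1 : ℝ)) :
    (∃ x : Mbar, τbar x = 0) ∧ (∀ x : Mbar, τbar x = 0 → x ∉ Set.range ι) := by
  obtain ⟨s⟩ := ‹Nonempty S›
  obtain ⟨c, hc0, hcb⟩ := EReal.lt_iff_exists_real_btwn.1 hb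
  have hc : 0 < c := by exact_mod_cast hc0
  have hpos : ∀ n : ℕ, 0 < c * (1 / ((n : ℝ) + 1)) := fun n => by positivity
  have hle : ∀ n : ℕ, c * (1 / ((n : ℝ) + 1)) ≤ c := fun n => by
    have h1 : 1 / ((n : ℝ) + 1) ≤ 1 := by
      rw [div_le_one (by positivity)]
      have : (0 : ℝ) ≤ n := Nat.cast_nonneg n
      linarith
    nlinarith
  let u : ℕ → GRWPoint0 b S := fun n =>
    (⟨c * (1 / ((n : ℝ) + 1)), hpos n, lt_of_le_of_lt (by exact_mod_cast hle n) hcb⟩, s)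
  have hlim : Tendsto (fun n => ((u n).1 : ℝ)) atTop (𝓝 0) := by
    have := (tendsto_one_div_add_atTop_nhds_zero_nat (𝕜 := ℝ)).const_mul c
    rw [mul_zero] at this
    exact this
  have hcau : CauchySeq (fun n => ι (u n)) := by
    rw [Metric.cauchySeq_iff]
    intro ε hε
    obtain ⟨N, hN⟩ := Metric.cauchySeq_iff.1 hlim.cauchySeq (ε / C₂) (by positivity)
    refine ⟨N, fun m hm n hn => ?_⟩
    have h1 := hN n hn m hm
    rw [Real.dist_eq, lt_div_iff₀ hC₂] at h1
    rw [hiso]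
    have h2 := hF2 (u m) (u n) rfl
    linarith
  refine ⟨?_, ?_⟩
  · obtain ⟨x, hx⟩ := cauchySeq_tendsto_of_complete hcau
    refine ⟨x, ?_⟩
    have h3 := (hτcont.tendsto x).comp hx
    refine tendsto_nhds_unique h3 ?_
    refine hlim.congr fun n => ?_
    exact (hτext (u n)).symm
  · rintro x hx ⟨p, rfl⟩
    rw [hτext] at hx
    exact absurd hx p.1.2.1.ne'
end
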